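/- arXiv:1107.1182 — 3 statements merged into one kernel-verified Lean document; each statement's English description precedes it below -/
import Mathlib

section
/- For every integer n ≥ 5, every proper subgroup H of the alternating group A_n has index at least n in A_n. -/
/-- For every integer `n ≥ 5`, every proper subgroup `H` of the alternating group `A_n`
has index at least `n` in `A_n`. -/
theorem alternatingGroup_proper_subgroup_index_ge (n : ℕ) (hn : 5 ≤ n)
    (H : Subgroup (alternatingGroup (Fin n))) (hH : H ≠ ⊤) :
    n ≤ H.index := by
  have hs : IsSimpleGroup (alternatingGroup (Fin n)) :=
    alternatingGroup.isSimpleGroup (by simpa using hn)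
  have hbot : H.normalCore = ⊥ := by
    rcases (inferInstance : H.normalCore.Normal).eq_bot_or_eq_top with h | h
    · exact h
    · exact absurd (top_le_iff.mp (h ▸ H.normalCore_le)) hH
  rw [Subgroup.normalCore_eq_ker] at hbot
  have hinj := (MonoidHom.ker_eq_bot_iff _).mp hbot
  have hle := Nat.card_le_card_of_injective _ hinj
  rw [Nat.card_perm, ← Subgroup.index_eq_card] at hle
  by_contra! hlt
  have : Nontrivial (Fin n) := Fin.nontrivial_iff_two_le.mpr (by omega)
  have h2 := two_mul_nat_card_alternatingGroup (α := Fin n)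
  rw [Nat.card_perm, Nat.card_fin] at h2
  obtain ⟨k, rfl⟩ : ∃ k, n = k + 1 := ⟨n - 1, by omega⟩
  have h3 : H.index.factorial ≤ k.factorial := Nat.factorial_le (by omega)
  rw [Nat.factorial_succ] at h2
  have := k.factorial_pos
  nlinarith
end

section
/- Fix a finite set S ⊆ ℂ and an integer d ≥ 1. Then there are finitely many equivalence classes of polynomials of degree d whose set of critical values is contained in S; that is, there exist finitely many polynomials g_1, …, g_k ∈ ℂ[z] of degree d such that every polynomial f ∈ ℂ[z] of degree d all of whose critical values lie in S satisfies f(z) = g_i(az + b) identically for some index i, some a ∈ ℂ with a ≠ 0, and some b ∈ ℂ. -/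
open Polynomial

/-- `c` is a critical value of polynomial `f`: `c = f(d)` for some `d` with `f′(d) = 0`. -/
def IsCriticalValue (f : ℂ[X]) (c : ℂ) : Prop :=
  ∃ d : ℂ, (Polynomial.derivative f).eval d = 0 ∧ f.eval d = c

section Rigidity

variable {K : Type*} [Field K] [Algebra ℂ K]

/-- The coefficientwise extension of a derivation to polynomials. -/
noncomputable def coeffDer (D : Derivation ℂ K K) : Derivation ℂ K[X] K[X] :=
  PolynomialModule.equivPolynomialSelf.compDer D.mapCoeffs

lemma coeffDer_coeff (D : Derivation ℂ K K) (p : K[X]) (i : ℕ) :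
    (coeffDer D p).coeff i = D (p.coeff i) := rfl

lemma coeffDer_derivative (D : Derivation ℂ K K) (p : K[X]) :
    coeffDer D (derivative p) = derivative (coeffDer D p) := by
  ext i
  rw [coeffDer_coeff, coeff_derivative, coeff_derivative, coeffDer_coeff]
  have : ((i : K) + 1) = ((i + 1 : ℕ) : K) := by push_cast; ring
  rw [this, Derivation.leibniz, Derivation.map_natCast]
  simp [mul_comm]

lemma coeffDer_lin (D : Derivation ℂ K K) (a : K) :
    coeffDer D (X - C a) = - C (D a) := by
  ext i
  rw [coeffDer_coeff]
  rcases i with _ | _ | i <;> simp [coeff_X, coeff_C]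

lemma pow_dvd_coeffDer (D : Derivation ℂ K K) (a : K) (m : ℕ) (p : K[X])
    (h : (X - C a) ^ (m + 1) ∣ p) : (X - C a) ^ m ∣ coeffDer D p := by
  obtain ⟨q, rfl⟩ := h
  rw [Derivation.leibniz, Derivation.leibniz_pow]
  simp only [smul_eq_mul, nsmul_eq_mul, Nat.add_sub_cancel]
  exact ⟨(X - C a) * coeffDer D q + q * (((m + 1 : ℕ) : K[X]) * coeffDer D (X - C a)), by ring⟩

/-- Roots of a polynomial with constant coefficients are constant. -/
lemma der_root_eq_zero [CharZero K] (D : Derivation ℂ K K) (p : K[X]) (hp : p ≠ 0)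
    (h : coeffDer D p = 0) (a : K) (ha : p.IsRoot a) : D a = 0 := by
  obtain ⟨q, hq, hqa⟩ := exists_eq_pow_rootMultiplicity_mul_and_not_dvd p hp a
  have hm : 0 < p.rootMultiplicity a := (rootMultiplicity_pos hp).2 ha
  obtain ⟨m, hm'⟩ := Nat.exists_eq_succ_of_ne_zero hm.ne'
  rw [hm'] at hq
  rw [hq, Derivation.leibniz, Derivation.leibniz_pow, coeffDer_lin] at h
  simp only [smul_eq_mul, nsmul_eq_mul, Nat.succ_eq_add_one, Nat.add_sub_cancel] at h
  have h2 : (X - C a) ^ m * ((X - C a) * coeffDer D q - q * (((m + 1 : ℕ) : K[X]) * C (D a))) = 0 := by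
    rw [← h]; ring
  have h3 := (mul_eq_zero.1 h2).resolve_left (pow_ne_zero _ (X_sub_C_ne_zero a))
  have h4 := congrArg (eval a) h3
  simp only [eval_sub, eval_mul, eval_X, eval_C, sub_self, zero_mul, zero_sub, eval_natCast,
    eval_zero, neg_eq_zero, mul_eq_zero] at h4
  rcases h4 with h4 | h4 | h4
  · exact absurd (dvd_iff_isRoot.2 h4) hqa
  · exact absurd h4 (Nat.cast_ne_zero.2 (Nat.succ_ne_zero m))
  · exact h4

lemma rigid [CharZero K] (D : Derivation ℂ K K) (d n : ℕ) (hd : 1 ≤ d) (F : K[X]) (c : Fin n → K)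
    (hdeg : F.natDegree ≤ d) (hmon : F.coeff d = 1) (hcen : F.coeff (d - 1) = 0)
    (hder : derivative F = C (d : K) * ∏ j, (X - C (c j)))
    (hcv : ∀ j, ∃ s : ℂ, F.eval (c j) = algebraMap ℂ K s) :
    coeffDer D F = 0 ∧ ∀ j, D (c j) = 0 := by
  have hdK : (d : K) ≠ 0 := Nat.cast_ne_zero.2 (by omega)
  have hprod : (∏ j, (X - C (c j))) ≠ 0 := Finset.prod_ne_zero_iff.2 fun j _ => X_sub_C_ne_zero _
  have hF'0 : derivative F ≠ 0 := by
    rw [hder]; exact mul_ne_zero (C_ne_zero.2 hdK) hprod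
  have hroot : ∀ a, (derivative F).IsRoot a → ∃ j, a = c j := by
    intro a ha
    rw [hder, IsRoot, eval_mul, eval_C, eval_prod] at ha
    obtain ⟨j, -, hj⟩ := Finset.prod_eq_zero_iff.1 ((mul_eq_zero.1 ha).resolve_left hdK)
    exact ⟨j, by simpa [sub_eq_zero] using hj⟩
  have hroot' : ∀ j, (derivative F).IsRoot (c j) := by
    intro j
    rw [hder, IsRoot, eval_mul, eval_prod, Finset.prod_eq_zero (Finset.mem_univ j) (by simp),
      mul_zero]
  have hspl : (derivative F).Splits := by
    rw [hder]
    exact (Splits.C _).mul (Splits.prod fun j _ => Splits.X_sub_C _)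
  have key : coeffDer D F = 0 := by
    by_contra hne
    have hdvd : derivative F ∣ coeffDer D F := by
      classical
      refine hspl.dvd_of_roots_le_roots hF'0 (Multiset.le_iff_count.2 fun a => ?_)
      rw [count_roots, count_roots]
      by_cases ha : (derivative F).IsRoot a
      · obtain ⟨j, rfl⟩ := hroot a ha
        obtain ⟨s, hs⟩ := hcv j
        set G := F - C (algebraMap ℂ K s) with hG
        have hG' : derivative G = derivative F := by simp [hG]
        have hG0 : G ≠ 0 := by rintro h; rw [h] at hG'; exact hF'0 (by simpa using hG'.symm)
        have hGr : G.IsRoot (c j) := by simp [hG, hs]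
        have h1 := derivative_rootMultiplicity_of_root hGr
        have h2 := (rootMultiplicity_pos hG0).2 hGr
        have hDG : coeffDer D G = coeffDer D F := by
          rw [hG, map_sub, sub_eq_self]
          ext i
          rw [coeffDer_coeff, coeff_C]
          split_ifs <;> simp
        rw [le_rootMultiplicity_iff hne, ← hDG]
        apply pow_dvd_coeffDer
        rw [← le_rootMultiplicity_iff hG0, ← hG']
        omega
      · rw [rootMultiplicity_eq_zero ha]; exact Nat.zero_le _
    have h1 := natDegree_le_of_dvd hdvd hne
    have h2 : (derivative F).natDegree = d - 1 := by
      apply le_antisymm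
      · exact (natDegree_derivative_le F).trans (by omega)
      · apply le_natDegree_of_ne_zero
        rw [coeff_derivative, Nat.sub_add_cancel hd, hmon]
        rw [one_mul]
        exact_mod_cast (by omega : d - 1 + 1 ≠ 0)
    apply hne
    ext i
    rw [coeffDer_coeff, coeff_zero]
    rcases lt_trichotomy i (d - 1) with hi | hi | hi
    · exfalso
      have h3 : (coeffDer D F).natDegree < d - 1 := by
        have : (coeffDer D F).leadingCoeff ≠ 0 := leadingCoeff_ne_zero.2 hne
        rw [leadingCoeff, coeffDer_coeff] at this
        by_contra hcon
        apply this
        rcases (by omega : (coeffDer D F).natDegree = d - 1 ∨ (coeffDer D F).natDegree = d ∨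
          d < (coeffDer D F).natDegree) with h | h | h
        · rw [h, hcen, map_zero]
        · rw [h, hmon, Derivation.map_one_eq_zero]
        · rw [coeff_eq_zero_of_natDegree_lt (by omega), map_zero]
      omega
    · rw [hi, hcen, map_zero]
    · rcases (by omega : i = d ∨ d < i) with h | h
      · rw [h, hmon, Derivation.map_one_eq_zero]
      · rw [coeff_eq_zero_of_natDegree_lt (by omega), map_zero]
  refine ⟨key, fun j => der_root_eq_zero D _ hF'0 ?_ _ (hroot' j)⟩
  rw [coeffDer_derivative, key, derivative_zero]

/-- If all derivations vanish, an essentially finite type extension of `ℂ` is trivial. -/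
lemma surj_of_der [Algebra.EssFiniteType ℂ K] (h : ∀ (D : Derivation ℂ K K) x, D x = 0) :
    Function.Surjective (algebraMap ℂ K) := by
  have hsub : Subsingleton (Ω[K⁄ℂ]) := by
    have h0 : ∀ x, KaehlerDifferential.D ℂ K x = 0 := by
      intro x
      rw [← Module.forall_dual_apply_eq_zero_iff K]
      intro f
      exact h (f.compDer (KaehlerDifferential.D ℂ K)) x
    have hs := KaehlerDifferential.span_range_derivation ℂ K
    have : Set.range (KaehlerDifferential.D ℂ K) ⊆ {0} := by
      rintro _ ⟨x, rfl⟩; exact h0 x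
    have hle := Submodule.span_mono (R := K) this
    rw [hs, Submodule.span_zero_singleton, top_le_iff] at hle
    exact (Submodule.subsingleton_iff K).1 (subsingleton_of_bot_eq_top hle)
  have : Algebra.FormallyUnramified ℂ K := ⟨hsub⟩
  have : Module.Finite ℂ K := Algebra.FormallyUnramified.finite_of_free ℂ K
  exact (IsAlgClosed.algebraMap_bijective_of_isIntegral (k := ℂ) (K := K)).2

end Rigidity

/-- The polynomial with given coefficients. -/
noncomputable def polyOf {B : Type*} [CommRing B] (d : ℕ) (v : Fin (d + 1) ⊕ Fin (d - 1) → B) :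
    B[X] := ∑ i : Fin (d + 1), C (v (Sum.inl i)) * X ^ (i : ℕ)

lemma polyOf_map {B B' : Type*} [CommRing B] [CommRing B'] (φ : B →+* B') (d : ℕ)
    (v : Fin (d + 1) ⊕ Fin (d - 1) → B) :
    (polyOf d v).map φ = polyOf d (fun i => φ (v i)) := by
  simp [polyOf, Polynomial.map_sum]

lemma polyOf_coeff {B : Type*} [CommRing B] (d : ℕ) (v : Fin (d + 1) ⊕ Fin (d - 1) → B)
    (i : Fin (d + 1)) : (polyOf d v).coeff i = v (Sum.inl i) := by
  simp [polyOf, coeff_X_pow, Fin.val_inj]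

lemma polyOf_natDegree {B : Type*} [CommRing B] (d : ℕ) (v : Fin (d + 1) ⊕ Fin (d - 1) → B) :
    (polyOf d v).natDegree ≤ d := by
  refine natDegree_sum_le_of_forall_le _ _ fun i _ => ?_
  exact (natDegree_C_mul_X_pow_le _ _).trans (by omega)

/-- Normalised polynomials with marked critical points and critical values in `S`. -/
structure Good (S : Finset ℂ) (d : ℕ) {B : Type*} [CommRing B] [Algebra ℂ B]
    (v : Fin (d + 1) ⊕ Fin (d - 1) → B) : Prop where
  mon : (polyOf d v).coeff d = 1
  cen : (polyOf d v).coeff (d - 1) = 0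
  der : derivative (polyOf d v) = C (d : B) * ∏ j, (X - C (v (Sum.inr j)))
  cv : ∀ j, ∏ s ∈ S, ((polyOf d v).eval (v (Sum.inr j)) - algebraMap ℂ B s) = 0

lemma good_transfer (S : Finset ℂ) (d : ℕ) {K : Type*} [CommRing K] [Algebra ℂ K]
    (φ : MvPolynomial (Fin (d + 1) ⊕ Fin (d - 1)) ℂ →ₐ[ℂ] K)
    (h : ∀ r, (∀ v, Good S d (B := ℂ) v → MvPolynomial.eval v r = 0) → φ r = 0) :
    Good S d (fun i => φ (MvPolynomial.X i)) := by
  set U : Fin (d + 1) ⊕ Fin (d - 1) → MvPolynomial (Fin (d + 1) ⊕ Fin (d - 1)) ℂ :=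
    MvPolynomial.X with hU
  have e1 : polyOf d (fun i => φ (U i)) = (polyOf d U).map (φ : _ →+* K) := by
    rw [polyOf_map]; rfl
  have e2 : ∀ v : _ → ℂ, (polyOf d U).map (MvPolynomial.eval v) = polyOf d v := by
    intro v; rw [polyOf_map]; simp [hU]
  have h' : ∀ r r', (∀ v, Good S d (B := ℂ) v → MvPolynomial.eval v r = MvPolynomial.eval v r') →
      φ r = φ r' := by
    intro r r' hr
    rw [← sub_eq_zero, ← map_sub]
    apply h
    intro v hv
    rw [map_sub, hr v hv, sub_self]
  refine ⟨?_, ?_, ?_, ?_⟩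
  · rw [e1, coeff_map, ← map_one φ]
    refine h' _ _ fun v hv => ?_
    rw [← coeff_map, e2, hv.mon, map_one]
  · rw [e1, coeff_map, ← map_zero φ]
    refine h' _ _ fun v hv => ?_
    rw [← coeff_map, e2, hv.cen, map_zero]
  · have e3 : C (d : K) * ∏ j, (X - C (φ (U (Sum.inr j)))) =
      (C (d : MvPolynomial (Fin (d + 1) ⊕ Fin (d - 1)) ℂ) *
        ∏ j, (X - C (U (Sum.inr j)))).map (φ : _ →+* K) := by
      simp [Polynomial.map_prod]
    rw [e1, e3, derivative_map]
    ext k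
    rw [coeff_map, coeff_map]
    refine h' _ _ fun v hv => ?_
    rw [← coeff_map, ← coeff_map, ← derivative_map, e2, hv.der]
    simp [Polynomial.map_prod, hU]
  · intro j
    have e4 : ∏ s ∈ S, ((polyOf d (fun i => φ (U i))).eval (φ (U (Sum.inr j))) - algebraMap ℂ K s)
        = φ (∏ s ∈ S, ((polyOf d U).eval (U (Sum.inr j)) - algebraMap ℂ _ s)) := by
      rw [map_prod]
      refine Finset.prod_congr rfl fun s _ => ?_
      rw [map_sub, AlgHom.commutes, e1]
      congr 1
      exact eval_map_apply (φ : MvPolynomial (Fin (d + 1) ⊕ Fin (d - 1)) ℂ →+* K) _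
    rw [e4]
    apply h
    intro v hv
    rw [map_prod, ← hv.cv j]
    refine Finset.prod_congr rfl fun s _ => ?_
    rw [map_sub, ← e2]
    congr 1
    · rw [← eval_map_apply]; simp [hU]
    · simp [MvPolynomial.algebraMap_eq]

lemma good_finite (S : Finset ℂ) (d : ℕ) (hd : 1 ≤ d) :
    {v : Fin (d + 1) ⊕ Fin (d - 1) → ℂ | Good S d v}.Finite := by
  set R := MvPolynomial (Fin (d + 1) ⊕ Fin (d - 1)) ℂ with hR
  let I : Ideal R := ⨅ v : {v : Fin (d + 1) ⊕ Fin (d - 1) → ℂ // Good S d v},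
    RingHom.ker (MvPolynomial.eval v.1)
  have hI : ∀ r : R, (∀ v, Good S d (B := ℂ) v → MvPolynomial.eval v r = 0) → r ∈ I := by
    intro r hr
    simp only [I, Ideal.mem_iInf, RingHom.mem_ker]
    exact fun v => hr v.1 v.2
  have hfin := I.finite_minimalPrimes_of_isNoetherianRing R
  have hex : ∀ v : Fin (d + 1) ⊕ Fin (d - 1) → ℂ, Good S d v →
      ∃ P ∈ I.minimalPrimes, P ≤ RingHom.ker (MvPolynomial.eval v : R →+* ℂ) := by
    intro v hv
    have hp : (RingHom.ker (MvPolynomial.eval v : R →+* ℂ)).IsPrime := RingHom.ker_isPrime _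
    exact Ideal.exists_minimalPrimes_le (iInf_le_of_le ⟨v, hv⟩ le_rfl)
  have hconst : ∀ P ∈ I.minimalPrimes, ∃ w : Fin (d + 1) ⊕ Fin (d - 1) → ℂ,
      ∀ i, (MvPolynomial.X i - MvPolynomial.C (w i) : R) ∈ P := by
    intro P hP
    have hPp : P.IsPrime := hP.1.1
    have hIP : I ≤ P := hP.1.2
    let K := FractionRing (R ⧸ P)
    have : Algebra.EssFiniteType (R ⧸ P) K :=
      Algebra.EssFiniteType.of_isLocalization K (nonZeroDivisors (R ⧸ P))
    have : Algebra.EssFiniteType ℂ K := Algebra.EssFiniteType.comp ℂ (R ⧸ P) K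
    have : CharZero K := charZero_of_injective_algebraMap (algebraMap ℂ K).injective
    let ψ : (R ⧸ P) →ₐ[ℂ] K := IsScalarTower.toAlgHom ℂ (R ⧸ P) K
    have hψ : Function.Injective ψ := IsFractionRing.injective (R ⧸ P) K
    let φ : R →ₐ[ℂ] K := ψ.comp (Ideal.Quotient.mkₐ ℂ P)
    have hφ : ∀ r, φ r = 0 ↔ r ∈ P := by
      intro r
      change ψ (Ideal.Quotient.mk P r) = 0 ↔ _
      rw [map_eq_zero_iff ψ hψ, Ideal.Quotient.eq_zero_iff_mem]
    have hg : Good S d (fun i => φ (MvPolynomial.X i)) :=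
      good_transfer S d φ fun r hr => (hφ r).2 (hIP (hI r hr))
    have hD : ∀ (D : Derivation ℂ K K) x, D x = 0 := by
      intro D
      obtain ⟨h1, h2⟩ := rigid D d (d - 1) hd _ _ (polyOf_natDegree d _) hg.mon hg.cen hg.der (by
        intro j
        obtain ⟨s, -, hs⟩ := Finset.prod_eq_zero_iff.1 (hg.cv j)
        exact ⟨s, sub_eq_zero.1 hs⟩)
      have h3 : ∀ i, D (φ (MvPolynomial.X i)) = 0 := by
        rintro (i | j)
        · have := coeffDer_coeff D (polyOf d (fun i => φ (MvPolynomial.X i))) i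
          rw [h1, polyOf_coeff] at this
          simpa using this.symm
        · exact h2 j
      have h4 : ∀ r : R, D (φ r) = 0 := by
        intro r
        induction r using MvPolynomial.induction_on with
        | C a =>
          have : φ (MvPolynomial.C a) = algebraMap ℂ K a := φ.commutes a
          rw [this, Derivation.map_algebraMap]
        | add p q hp hq => rw [map_add, map_add, hp, hq, add_zero]
        | mul_X p i hp => rw [map_mul, Derivation.leibniz, hp, h3, smul_zero, smul_zero, add_zero]
      intro x
      obtain ⟨a, b, hb, rfl⟩ := IsFractionRing.div_surjective (A := R ⧸ P) x
      obtain ⟨a, rfl⟩ := Ideal.Quotient.mk_surjective a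
      obtain ⟨b, rfl⟩ := Ideal.Quotient.mk_surjective b
      change D (φ a / φ b) = 0
      rw [div_eq_mul_inv, Derivation.leibniz, Derivation.leibniz_inv, h4, h4]
      simp
    have hsurj := surj_of_der hD
    choose w hw using fun i => hsurj (φ (MvPolynomial.X i))
    refine ⟨w, fun i => ?_⟩
    rw [← hφ, map_sub, ← hw]
    have : φ (MvPolynomial.C (w i)) = algebraMap ℂ K (w i) := φ.commutes _
    rw [this, sub_self]
  choose! p hp1 hp2 using hex
  refine Set.Finite.of_finite_image (f := p) (hfin.subset ?_) ?_
  · rintro _ ⟨v, hv, rfl⟩; exact hp1 v hv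
  · intro v hv v' hv' hpp
    obtain ⟨w, hw⟩ := hconst _ (hp1 v hv)
    have h1 : ∀ i, v i = w i := by
      intro i
      have : MvPolynomial.eval v (MvPolynomial.X i - MvPolynomial.C (w i)) = 0 := hp2 v hv (hw i)
      rwa [map_sub, MvPolynomial.eval_X, MvPolynomial.eval_C, sub_eq_zero] at this
    have h2 : ∀ i, v' i = w i := by
      intro i
      have : MvPolynomial.eval v' (MvPolynomial.X i - MvPolynomial.C (w i)) = 0 := hp2 v' hv' (hpp ▸ hw i)
      rwa [map_sub, MvPolynomial.eval_X, MvPolynomial.eval_C, sub_eq_zero] at this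
    funext i
    rw [h1, h2]

/-- Every monic centred polynomial with critical values in `S` comes from a good point. -/
lemma exists_good (S : Finset ℂ) (d : ℕ) (hd : 1 ≤ d) (g : ℂ[X]) (hdeg : g.natDegree = d)
    (hmon : g.coeff d = 1) (hcen : g.coeff (d - 1) = 0)
    (hcv : ∀ c, IsCriticalValue g c → c ∈ S) : ∃ v, Good S d (B := ℂ) v ∧ polyOf d v = g := by
  have hdC : (d : ℂ) ≠ 0 := Nat.cast_ne_zero.2 (by omega)
  have hlc : (derivative g).leadingCoeff = d := by
    rw [leadingCoeff, natDegree_derivative, hdeg, coeff_derivative, Nat.sub_add_cancel hd, hmon]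
    rw [one_mul]
    exact_mod_cast Nat.sub_add_cancel hd
  have hspl : (derivative g).Splits := IsAlgClosed.splits _
  have hcard : (derivative g).roots.card = d - 1 := by
    rw [← hspl.natDegree_eq_card_roots, natDegree_derivative, hdeg]
  obtain ⟨c, hc⟩ : ∃ c : Fin (d - 1) → ℂ, (derivative g).roots = Finset.univ.val.map c := by
    rw [← hcard]
    refine ⟨fun i => (derivative g).roots.toList.get (i.cast (by simp)), ?_⟩
    have h2 : List.ofFn (fun i : Fin (derivative g).roots.card =>
        (derivative g).roots.toList.get (i.cast (by simp))) = (derivative g).roots.toList := by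
      apply List.ext_get
      · simp
      · intro n h1 h2; simp
    conv_lhs => rw [← Multiset.coe_toList (derivative g).roots, ← h2]
    rw [Fin.univ_def, List.ofFn_eq_map]
    rfl
  let v : Fin (d + 1) ⊕ Fin (d - 1) → ℂ := Sum.elim (fun i => g.coeff i) c
  have hv : polyOf d v = g := by
    ext k
    by_cases hk : k < d + 1
    · exact polyOf_coeff d v ⟨k, hk⟩
    · rw [coeff_eq_zero_of_natDegree_lt (by have := polyOf_natDegree d v; omega),
        coeff_eq_zero_of_natDegree_lt (by omega)]
  have hder : derivative g = C (d : ℂ) * ∏ j, (X - C (c j)) := by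
    conv_lhs => rw [hspl.eq_prod_roots, hlc, hc, Multiset.map_map]
    rfl
  refine ⟨v, ⟨?_, ?_, ?_, ?_⟩, hv⟩
  · rw [hv, hmon]
  · rw [hv, hcen]
  · rw [hv, hder]; rfl
  · intro j
    rw [hv]
    refine Finset.prod_eq_zero (hcv (g.eval (c j)) ⟨c j, ?_, rfl⟩) ?_
    · rw [hder, eval_mul, eval_prod, Finset.prod_eq_zero (Finset.mem_univ j) (by simp), mul_zero]
    · simp [v]

lemma normalise (d : ℕ) (hd : 1 ≤ d) (f : ℂ[X]) (hdeg : f.natDegree = d) :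
    ∃ (g : ℂ[X]) (a b a' b' : ℂ), a ≠ 0 ∧ a' ≠ 0 ∧ f = g.comp (C a * X + C b) ∧
      g = f.comp (C a' * X + C b') ∧
      g.natDegree = d ∧ g.coeff d = 1 ∧ g.coeff (d - 1) = 0 := by
  have hl : f.coeff d ≠ 0 := by
    rw [← hdeg]; exact leadingCoeff_ne_zero.2 (by rintro rfl; simp at hdeg; omega)
  have hdC : (d : ℂ) ≠ 0 := Nat.cast_ne_zero.2 (by omega)
  obtain ⟨α, hα⟩ := IsAlgClosed.exists_pow_nat_eq ((f.coeff d)⁻¹) (n := d) (by omega)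
  have hα0 : α ≠ 0 := by
    rintro rfl
    rw [zero_pow (by omega)] at hα
    exact inv_ne_zero hl hα.symm
  set β : ℂ := - f.coeff (d - 1) / (d * f.coeff d) with hβ
  set t := taylor β f with ht
  have htd : t.natDegree = d := by rw [ht, natDegree_taylor, hdeg]
  have ht1 : t.coeff d = f.coeff d := by
    have := taylor_coeff β f d
    rw [ht, ← hdeg]; simp
  have ht0 : t.coeff (d - 1) = 0 := by
    rw [ht, taylor_coeff, eval_eq_sum_range' (n := 2), Finset.sum_range_succ,
      Finset.sum_range_one, hasseDeriv_coeff, hasseDeriv_coeff]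
    · rw [show 1 + (d - 1) = d by omega, zero_add, Nat.choose_self,
        show d.choose (d - 1) = d by
          rw [Nat.choose_symm_of_eq_add (show d = (d - 1) + 1 by omega), Nat.choose_one_right], hβ]
      field_simp
      push_cast
      ring
    · have := natDegree_hasseDeriv_le f (d - 1)
      omega
  refine ⟨t.comp (C α * X), α⁻¹, - (α⁻¹ * β), α, β, inv_ne_zero hα0, hα0, ?_, ?_, ?_, ?_, ?_⟩
  · rw [ht, taylor_apply, comp_assoc, comp_assoc]
    have : (X + C β).comp ((C α * X).comp (C α⁻¹ * X + C (-(α⁻¹ * β)))) = X := by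
      simp only [add_comp, mul_comp, X_comp, C_comp, mul_add, ← mul_assoc, ← C_mul]
      rw [mul_inv_cancel₀ hα0]
      simp [← mul_assoc, ← C_mul, hα0]
    rw [this, comp_X]
  · rw [ht, taylor_apply, comp_assoc]; simp
  · rw [natDegree_comp, natDegree_C_mul_X _ hα0, htd, mul_one]
  · rw [comp_C_mul_X_coeff, ht1, hα, mul_inv_cancel₀ hl]
  · rw [comp_C_mul_X_coeff, ht0, zero_mul]

theorem finitely_many_classes_with_critical_values_in (S : Set ℂ) (hS : S.Finite)
    (d : ℕ) (hd : 1 ≤ d) :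
    ∃ (k : ℕ) (g : Fin k → ℂ[X]),
      (∀ i, (g i).natDegree = d) ∧
      ∀ f : ℂ[X], f.natDegree = d → (∀ c : ℂ, IsCriticalValue f c → c ∈ S) →
        ∃ (i : Fin k) (a b : ℂ), a ≠ 0 ∧ f = (g i).comp (C a * X + C b) := by
  classical
  have hfin := good_finite hS.toFinset d hd
  let e := hfin.toFinset.equivFin
  refine ⟨hfin.toFinset.card, fun i => polyOf d (e.symm i).1, ?_, ?_⟩
  · intro i
    have hg : Good hS.toFinset d (e.symm i).1 := by
      have := (e.symm i).2
      exact hfin.mem_toFinset.1 this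
    refine le_antisymm (polyOf_natDegree d _) (le_natDegree_of_ne_zero ?_)
    rw [hg.mon]; exact one_ne_zero
  · intro f hf hcv
    obtain ⟨g, a, b, a', b', ha, ha', hfg, hgf, h1, h2, h3⟩ := normalise d hd f hf
    obtain ⟨v, hv, hvg⟩ := exists_good hS.toFinset d hd g h1 h2 h3 (by
      rintro c ⟨z, hz, rfl⟩
      rw [Set.Finite.mem_toFinset]
      refine hcv _ ⟨a' * z + b', ?_, ?_⟩
      · rw [hgf, derivative_comp] at hz
        simpa [ha'] using hz
      · rw [hgf]; simp)
    refine ⟨e ⟨v, by simpa using hv⟩, a, b, ha, ?_⟩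
    simp only [Equiv.symm_apply_apply]
    rw [hvg]; exact hfg
end

section
/- Let n ≥ 3 be an odd integer. Let Z ⊆ ℂ^(n−2) be the set of tuples (s_2, s_3, …, s_{n−1}) such that the polynomial x² − disc_t(t^n + s_2 t^(n−2) + ⋯ + s_{n−1} t − y) ∈ ℂ[y, x] is not irreducible (equivalently, such that the plane curve x² = disc_t(t^n + s_2 t^(n−2) + ⋯ + s_{n−1} t − y) fails to be geometrically irreducible). Then Z is a Zariski-closed subset of ℂ^(n−2) (i.e., Z is the common zero locus of an ideal of polynomials in ℂ[s_2, …, s_{n−1}]), and the Krull dimension of the quotient ring ℂ[s_2, …, s_{n−1}]/I(Z), where I(Z) is the ideal of all polynomials vanishing on Z, is at most (n − 1)/2. -/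
/-- The Sylvester matrix of two polynomials `f` and `g`, regarded as having degrees
`m` and `n` respectively. -/
def sylvester {R : Type*} [CommRing R] (f g : Polynomial R) (m n : ℕ) :
    Matrix (Fin (n + m)) (Fin (n + m)) R :=
  Matrix.of fun i j =>
    if (i : ℕ) < n then
      (if (i : ℕ) ≤ (j : ℕ) ∧ (j : ℕ) ≤ (i : ℕ) + m then f.coeff (m + i - j) else 0)
    else
      (if (i : ℕ) - n ≤ (j : ℕ) ∧ (j : ℕ) ≤ ((i : ℕ) - n) + n then
        g.coeff (n + ((i : ℕ) - n) - j) else 0)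

/-- The resultant `Res(f, g)`: the determinant of the Sylvester matrix of `f` and `g`. -/
noncomputable def resultant {R : Type*} [CommRing R] (f g : Polynomial R) : R :=
  (sylvester f g f.natDegree g.natDegree).det

/-- The discriminant `disc f = (−1)^(m(m−1)/2) · Res(f, f′)` of a polynomial `f` of
degree `m`. -/
noncomputable def polyDisc {R : Type*} [CommRing R] (f : Polynomial R) : R :=
  (-1) ^ (f.natDegree * (f.natDegree - 1) / 2) * resultant f (Polynomial.derivative f)

/-- The ideal of all polynomials vanishing on a subset `Z ⊆ ℂ^m`. -/
noncomputable def vanishingIdeal {m : ℕ} (Z : Set (Fin m → ℂ)) : Ideal (MvPolynomial (Fin m) ℂ) where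
  carrier := {p | ∀ x ∈ Z, MvPolynomial.eval x p = 0}
  add_mem' := by
    intro a b ha hb x hx
    simp [ha x hx, hb x hx]
  zero_mem' := by
    intro x hx
    simp
  smul_mem' := by
    intro c p hp x hx
    simp [smul_eq_mul, hp x hx]

section ReducibleFibersAux

open Polynomial

lemma aux_residue {k : Type*} [Field k] [CharZero k] (h : k[X]) (n : ℕ) (hn : 1 ≤ n)
    (hm : h.Monic) (hd : h.natDegree = n) (h1 : h.coeff (n - 1) = 0) (M : Multiset k)
    (hM : derivative h = C (n : k) * (M.map fun a => X - C a).prod)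
    (hr : ∀ a ∈ M, h.IsRoot a) : ∀ a ∈ M, a = 0 := by
  have hn0 : (n : k) ≠ 0 := by exact_mod_cast (by omega : n ≠ 0)
  have hh0 : h ≠ 0 := hm.ne_zero
  have hroots : (derivative h).roots = M := by
    rw [hM, roots_C_mul _ hn0, roots_multiset_prod_X_sub_C]
  have hle : M ≤ h.roots := by
    classical
    rw [Multiset.le_iff_count]
    intro a
    by_cases ha : a ∈ M
    · have := derivative_rootMultiplicity_of_root (hr a ha)
      rw [count_roots, ← hroots, count_roots, this]
      omega
    · rw [Multiset.count_eq_zero_of_notMem ha]; exact Nat.zero_le _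
  obtain ⟨q, hq⟩ := (Multiset.prod_X_sub_C_dvd_iff_le_roots hh0 M).2 hle
  have hPm : (M.map fun a => X - C a).prod.Monic := monic_multiset_prod_of_monic _ _ fun a _ => monic_X_sub_C a
  have hqm : q.Monic := by
    rw [hq] at hm; exact hPm.of_mul_monic_left hm
  have hPd : (M.map fun a => X - C a).prod.natDegree = n - 1 := by
    have h2 : (derivative h).natDegree = n - 1 := by rw [natDegree_derivative, hd]
    rwa [hM, natDegree_C_mul hn0] at h2
  have hqd : q.natDegree = 1 := by
    have := hPm.natDegree_mul hqm
    rw [← hq, hd, hPd] at this; omega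
  have hq2 : q = X + C (q.coeff 0) := hqm.eq_X_add_C hqd
  set b := q.coeff 0
  have key : C (n : k) * h = derivative h * (X + C b) := by
    rw [hM, ← hq2, mul_assoc, ← hq]
  have hb : b = 0 := by
    have := congrArg (fun p => coeff p (n - 1)) key
    simp only [coeff_C_mul, h1, mul_add, coeff_add, coeff_mul_C, coeff_derivative] at this
    rcases Nat.lt_or_ge 1 n with hn1 | hn1
    · obtain ⟨j, rfl⟩ : ∃ j, n = j + 2 := ⟨n - 2, by omega⟩
      have h3 : h.coeff (j + 2) = 1 := by rw [← hd]; exact hm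
      rw [show j + 2 - 1 = j + 1 by omega] at *
      rw [coeff_mul_X, coeff_derivative, h1, h3] at this
      have h4 : ((j + 1 : ℕ) : k) + 1 ≠ 0 := by exact_mod_cast (by omega : j + 1 + 1 ≠ 0)
      push_cast at this h4
      have h8 : ((j:k) + 1 + 1) * b = 0 := by linear_combination -this
      exact (mul_eq_zero.1 h8).resolve_left h4
    · obtain rfl : n = 1 := by omega
      have h3 : h.coeff 1 = 1 := by rw [← hd]; exact hm
      simpa [h3, eq_comm] using this
  intro a ha
  have hcoef : ∀ i < n, h.coeff i = 0 := by
    intro i hi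
    have := congrArg (fun p => coeff p i) key
    rw [hb] at this
    simp only [coeff_C_mul, map_zero, add_zero] at this
    rcases i with _ | i
    · simpa [hn0] using this
    · rw [coeff_mul_X, coeff_derivative] at this
      have h5 : ((n : k) - (i + 1)) ≠ 0 := by
        rw [sub_ne_zero]; exact_mod_cast (by omega : n ≠ i + 1)
      have h6 : ((n : k) - (i + 1)) * h.coeff (i + 1) = 0 := by linear_combination this
      simpa [h5] using h6
  have hX : h = X ^ n := by
    ext i
    rw [coeff_X_pow]
    split_ifs with hi
    · rw [hi, ← hd]; exact hm
    · rcases lt_or_gt_of_ne hi with h7 | h7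
      · exact hcoef i h7
      · exact coeff_eq_zero_of_natDegree_lt (by omega)
  have := hr a ha
  rw [hX] at this
  rw [IsRoot, eval_pow, eval_X] at this
  exact pow_eq_zero_iff (by omega) |>.1 this

lemma crit_mem {K : Type*} [Field K] (V : ValuationSubring K)
    (hQ : ∀ j : ℕ, j ≠ 0 → (j : K) ≠ 0 ∧ (j : K)⁻¹ ∈ V) (f : K[X]) (n : ℕ) (hn : 1 ≤ n)
    (hm : f.Monic) (hd : f.natDegree = n) (h1 : f.coeff (n - 1) = 0) (h0 : f.coeff 0 = 0)
    (M : Multiset K)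
    (hM : derivative f = C (n : K) * (M.map fun a => X - C a).prod)
    (hcard : M.card = n - 1)
    (hr : ∀ a ∈ M, f.eval a ∈ V) : ∀ a ∈ M, a ∈ V := by
  classical
  by_contra! hcon
  obtain ⟨c0, hc0, hc0V⟩ := hcon
  obtain ⟨l, hl, hmax⟩ := Finset.exists_max_image M.toFinset V.valuation ⟨c0, by simpa using hc0⟩
  have hlV : 1 < V.valuation l := by
    have h2 : 1 < V.valuation c0 := by
      rw [← not_le, V.valuation_le_one_iff]; exact hc0V
    exact h2.trans_le (hmax c0 (by simpa using hc0))
  have hl0 : l ≠ 0 := by rintro rfl; simp at hlV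
  have hv0 : V.valuation l ≠ 0 := by simpa using hl0
  set μ := l⁻¹ with hμ
  have hμv : V.valuation μ < 1 := by
    rw [hμ, map_inv₀]; exact inv_lt_one_of_one_lt₀ hlV
  have hscale : ∀ a ∈ M.map (fun c => μ * c), a ∈ V := by
    intro a ha
    obtain ⟨c, hc, rfl⟩ := Multiset.mem_map.1 ha
    rw [← V.valuation_le_one_iff, map_mul, hμ, map_inv₀]
    exact inv_mul_le_one_of_le₀ (hmax c (by simpa using hc)) zero_le'
  obtain ⟨M', hM'⟩ : ∃ M' : Multiset V, M'.map V.subtype = M.map (fun c => μ * c) := by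
    refine ⟨(M.map (fun c => μ * c)).pmap (fun a ha => (⟨a, ha⟩ : V)) hscale, ?_⟩
    rw [Multiset.map_pmap]
    simp [Multiset.pmap_eq_map]
  set g := C (μ ^ n) * f.comp (C l * X) with hg
  have hgc : ∀ i, g.coeff i = μ ^ n * (f.coeff i * l ^ i) := by
    intro i; rw [hg, coeff_C_mul, comp_C_mul_X_coeff]
  have hg' : derivative g = C (n : K) * ((M.map (fun c => μ * c)).map fun a => X - C a).prod := by
    rw [hg, derivative_C_mul, derivative_comp, hM, mul_comp, multiset_prod_comp]
    simp only [Multiset.map_map, Function.comp_def, sub_comp, X_comp, C_comp,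
      derivative_mul, derivative_C, derivative_X, zero_mul, zero_add, mul_one]
    have e1 : (M.map fun x => X - C (μ * x)).prod = C (μ ^ (n-1)) * (M.map fun x => C l * X - C x).prod := by
      rw [← hcard, C_pow, ← Multiset.prod_replicate, ← Multiset.map_const', ← Multiset.prod_map_mul]
      congr 1
      apply Multiset.map_congr rfl
      intro x _
      rw [mul_sub, ← mul_assoc, ← C_mul, hμ, inv_mul_cancel₀ hl0, C_1, one_mul, C_mul]
    rw [e1]
    have e2 : C (μ ^ n) * C l = C (μ ^ (n-1)) := by
      rw [← C_mul]; congr 1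
      obtain ⟨j, rfl⟩ : ∃ j, n = j + 1 := ⟨n - 1, by omega⟩
      rw [pow_succ, mul_assoc, hμ, inv_mul_cancel₀ hl0]; simp
    rw [← e2]; ring
  have hgmem : ∀ i, g.coeff i ∈ V := by
    have hd' : ∀ j, (derivative g).coeff j ∈ V := by
      intro j
      have : derivative g = (C (n : V) * (M'.map fun a => X - C a).prod).map V.subtype := by
        rw [hg', ← hM']
        simp [Polynomial.map_multiset_prod, Multiset.map_map, Function.comp_def]
      rw [this, coeff_map]
      exact SetLike.coe_mem _
    intro i
    rcases i with _ | i
    · rw [hgc, h0]; simpa using V.zero_mem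
    · have h3 := hd' i
      rw [coeff_derivative] at h3
      have h4 := V.mul_mem _ _ h3 (hQ (i+1) (by omega)).2
      have h5 := (hQ (i+1) (by omega)).1
      push_cast at h4 h5
      rwa [mul_assoc, mul_inv_cancel₀ h5, mul_one] at h4
  have hinj : Function.Injective V.subtype := Subtype.val_injective
  obtain ⟨G, hG⟩ : ∃ G : V[X], G.map V.subtype = g := by
    have : g ∈ lifts V.subtype := by
      rw [lifts_iff_coeff_lifts]
      intro i
      exact ⟨⟨_, hgmem i⟩, rfl⟩
    exact this
  have hln : μ ^ n * l ^ n = 1 := by rw [← mul_pow, hμ, inv_mul_cancel₀ hl0, one_pow]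
  have hfn : f.coeff n = 1 := by rw [← hd]; exact hm
  have hgd : g.natDegree = n := by
    apply natDegree_eq_of_le_of_coeff_ne_zero
    · rw [natDegree_le_iff_coeff_eq_zero]
      intro N hN
      rw [hgc, coeff_eq_zero_of_natDegree_lt (by omega)]; simp
    · rw [hgc, hfn, one_mul, hln]; exact one_ne_zero
  have hgm : g.Monic := by
    rw [Monic, leadingCoeff, hgd, hgc, hfn, one_mul, hln]
  have hGm : G.Monic := hinj.monic_map_iff.2 (hG ▸ hgm)
  have hGd : G.natDegree = n := by rw [← hgd, ← hG, natDegree_map_eq_of_injective hinj]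
  have hG' : derivative G = C (n : V) * (M'.map fun a => X - C a).prod := by
    apply map_injective _ hinj
    rw [← derivative_map, hG, hg', ← hM']
    simp [Polynomial.map_multiset_prod, Multiset.map_map, Function.comp_def]
  let ρ := IsLocalRing.residue V
  haveI : CharZero (IsLocalRing.ResidueField V) := by
    apply charZero_of_inj_zero
    intro j hj
    by_contra hj0
    obtain ⟨h5, h6⟩ := hQ j hj0
    have h7 : (j : V) * ⟨_, h6⟩ = 1 := by
      apply Subtype.ext
      simpa using mul_inv_cancel₀ h5
    have h8 := congrArg ρ h7
    rw [map_mul, map_natCast, hj, zero_mul, map_one] at h8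
    exact zero_ne_one h8
  have hfin := aux_residue (G.map ρ) n hn (hGm.map ρ) (by rw [hGm.natDegree_map, hGd])
    (by
      have : G.coeff (n-1) = 0 := by
        apply hinj
        rw [← coeff_map, hG, hgc, h1]; simp
      rw [coeff_map, this, map_zero]) (M'.map ρ)
    (by rw [derivative_map, hG']
        simp [Polynomial.map_multiset_prod, Multiset.map_map, Function.comp_def])
    (by
      intro a ha
      obtain ⟨b, hb, rfl⟩ := Multiset.mem_map.1 ha
      rw [IsRoot, eval_map, eval₂_at_apply]
      have h9 : V.subtype b ∈ M.map (fun c => μ * c) := by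
        rw [← hM']; exact Multiset.mem_map_of_mem _ hb
      obtain ⟨c, hc, hcb⟩ := Multiset.mem_map.1 h9
      have h10 : V.subtype (G.eval b) = μ ^ n * f.eval c := by
        rw [← eval₂_at_apply, ← eval_map, hG, ← hcb, hg]
        simp [eval_comp, ← mul_assoc, hμ, hl0]
      rw [IsLocalRing.residue_eq_zero_iff, V.valuation_lt_one_iff]
      change V.valuation (V.subtype (G.eval b)) < 1
      rw [h10, map_mul, map_pow]
      have h11 := (V.valuation_le_one_iff _).2 (hr c hc)
      refine lt_of_le_of_lt (mul_le_of_le_one_right' h11) ?_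
      exact pow_lt_one₀ zero_le' hμv (by omega))
  have h12 : (1 : K) ∈ M'.map V.subtype := by
    rw [hM']
    exact Multiset.mem_map.2 ⟨l, by simpa using hl, by rw [hμ, inv_mul_cancel₀ hl0]⟩
  obtain ⟨b, hb, hb1⟩ := Multiset.mem_map.1 h12
  have hb2 : b = 1 := hinj (by rw [hb1, map_one])
  have := hfin (ρ b) (Multiset.mem_map_of_mem _ hb)
  rw [hb2, map_one] at this
  exact one_ne_zero this

lemma integral_of_val {K : Type*} [Field K] (R : Subring K) (x : K)
    (h : ∀ V : ValuationSubring K, R ≤ V.toSubring → x ∈ V) : IsIntegral R x := by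
  by_contra hx
  let S := (integralClosure R K).toSubring
  haveI : IsIntegrallyClosedIn S K := 
    inferInstanceAs (IsIntegrallyClosedIn (integralClosure R K) K)
  obtain ⟨V, hV, hxV⟩ := Subring.exists_le_valuationSubring_of_isIntegrallyClosedIn (R := S) (x := x) hx
  exact hxV (h V fun r hr => hV (algebraMap_mem (integralClosure R K) ⟨r, hr⟩))

lemma exists_sqrt {A : Type*} [CommRing A] [Nontrivial A] [Algebra ℂ A] (P : A[X]) (m : ℕ) (hP : P.Monic)
    (hd : P.natDegree = 2 * m) :
    ∃ r : A[X], r.Monic ∧ r.natDegree = m ∧ (P - r ^ 2).degree < m := by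
  suffices h : ∀ k ≤ m, ∃ r : A[X], r.Monic ∧ r.natDegree = m ∧ (P - r ^ 2).degree < (2 * m - k : ℕ) by
    obtain ⟨r, h1, h2, h3⟩ := h m le_rfl
    exact ⟨r, h1, h2, by rwa [show 2 * m - m = m by omega] at h3⟩
  intro k
  induction k with
  | zero =>
    intro _
    refine ⟨X ^ m, monic_X_pow m, natDegree_X_pow m, ?_⟩
    have := degree_sub_lt (p := P) (q := (X ^ m) ^ 2) (by
      rw [← pow_mul, degree_X_pow, degree_eq_natDegree hP.ne_zero, hd, mul_comm]) hP.ne_zero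
      (by rw [hP.leadingCoeff, ((monic_X_pow m).pow 2).leadingCoeff])
    rwa [degree_eq_natDegree hP.ne_zero, hd] at this
  | succ k ih =>
    intro hk
    obtain ⟨r, h1, h2, h3⟩ := ih (by omega)
    set c := (P - r ^ 2).coeff (2 * m - k - 1) with hc
    obtain ⟨a, ha⟩ : ∃ a, a = algebraMap ℂ A (1/2) * c := ⟨_, rfl⟩
    have h2a : 2 * a = c := by
      have : (2 : A) = algebraMap ℂ A 2 := (map_ofNat _ 2).symm
      rw [ha, ← mul_assoc, this, ← map_mul]; norm_num
    have hlt : (C a * X ^ (m - k - 1)).degree < r.degree := by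
      rw [degree_eq_natDegree h1.ne_zero, h2]
      exact (degree_C_mul_X_pow_le _ _).trans_lt (by exact_mod_cast (by omega))
    refine ⟨r + C a * X ^ (m - k - 1), h1.add_of_left hlt, ?_, ?_⟩
    · rw [natDegree_add_eq_left_of_degree_lt hlt, h2]
    · rw [degree_lt_iff_coeff_zero] at h3 ⊢
      intro N hN
      have e : P - (r + C a * X ^ (m - k - 1)) ^ 2 = (P - r ^ 2) - C c * (r * X ^ (m-k-1))
          - C (a^2) * X ^ (2 * (m - k - 1)) := by
        rw [← h2a, C_mul (a := 2), C_pow, mul_comm 2 (m-k-1), pow_mul]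
        have h20 : C (2 : A) = 2 := map_ofNat C 2
        rw [h20]; ring
      rw [e, coeff_sub, coeff_sub, coeff_C_mul, coeff_C_mul, coeff_X_pow, if_neg (by omega),
        mul_zero, sub_zero, coeff_mul_X_pow', if_pos (by omega)]
      rcases eq_or_ne N (2 * m - k - 1) with rfl | hN2
      · rw [show 2 * m - k - 1 - (m - k - 1) = m by omega, ← hc]
        have : r.coeff m = 1 := by rw [← h2]; exact h1
        rw [this]; ring
      · rw [h3 N (by omega), coeff_eq_zero_of_natDegree_lt (p := r) (by omega)]; ring

lemma sq_iff {P r : ℂ[X]} (m : ℕ) (hP : P.Monic) (hr : r.Monic) (hrd : r.natDegree = m)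
    (h : (P - r ^ 2).degree < m) (hsq : ∃ q, P = q ^ 2) : P = r ^ 2 := by
  obtain ⟨q, hq⟩ := hsq
  have hlq : q.leadingCoeff ^ 2 = 1 := by rw [← leadingCoeff_pow, ← hq]; exact hP
  wlog h1 : q.leadingCoeff = 1 generalizing q
  · refine this (-q) (by rw [hq]; ring) (by simpa using hlq) ?_
    rcases sq_eq_sq_iff_eq_or_eq_neg.1 (hlq.trans (one_pow 2).symm) with h2 | h2
    · exact absurd h2 h1
    · simp [h2]
  have e : P - r ^ 2 = (q - r) * (q + r) := by rw [hq]; ring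
  by_contra hne
  have hqr : q - r ≠ 0 := fun h0 => hne (by rw [← sub_eq_zero, e, h0, zero_mul])
  have hadd : (q + r).degree = max q.degree r.degree :=
    degree_add_eq_of_leadingCoeff_add_ne_zero (by rw [h1, hr.leadingCoeff]; norm_num)
  rw [e, degree_mul, hadd] at h
  have h5 : (m : WithBot ℕ) ≤ max q.degree r.degree := by
    rw [← hrd, ← degree_eq_natDegree hr.ne_zero]; exact le_max_right _ _
  have h6 : (0 : WithBot ℕ) ≤ (q - r).degree := zero_le_degree_iff.2 hqr
  have := add_le_add h6 h5
  rw [zero_add] at this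
  exact absurd h (not_lt.2 this)


lemma det_sylvester_eq {R : Type*} [CommRing R] (f g : R[X]) (m n : ℕ) :
    ∃ ε : ℤˣ, (_root_.sylvester f g m n).det = ((ε : ℤ) : R) * Polynomial.resultant g f n m := by
  let e1 : Fin (n + m) ≃ Fin (n + m) :=
    finSumFinEquiv.symm.trans ((Equiv.sumCongr Fin.revPerm Fin.revPerm).trans finSumFinEquiv)
  let e2 : Fin (n + m) ≃ Fin (n + m) := Fin.revPerm
  have h : _root_.sylvester f g m n =
      Matrix.reindex e1.symm e2.symm (Polynomial.sylvester g f n m).transpose := by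
    ext i j
    simp only [Matrix.reindex_apply, Matrix.submatrix_apply, Matrix.transpose_apply, Equiv.symm_symm]
    induction i using Fin.addCases with
    | left i =>
      simp only [_root_.sylvester, Polynomial.sylvester, Matrix.of_apply, e1, e2, Equiv.trans_apply,
        finSumFinEquiv_symm_apply_castAdd, Equiv.sumCongr_apply, Sum.map_inl,
        finSumFinEquiv_apply_left, Fin.addCases_left, Fin.revPerm_apply, Set.mem_Icc,
        Fin.val_castAdd, Fin.val_rev]
      have hi := i.2
      have hj := j.2
      rw [if_pos hi]
      split_ifs with h1 h2 h2
      · congr 1; omega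
      · omega
      · omega
      · rfl
    | right i =>
      simp only [_root_.sylvester, Polynomial.sylvester, Matrix.of_apply, e1, e2, Equiv.trans_apply,
        finSumFinEquiv_symm_apply_natAdd, Equiv.sumCongr_apply, Sum.map_inr,
        finSumFinEquiv_apply_right, Fin.addCases_right, Fin.revPerm_apply, Set.mem_Icc,
        Fin.val_natAdd, Fin.val_rev]
      have hi := i.2
      have hj := j.2
      rw [if_neg (by omega)]
      split_ifs with h1 h2 h2
      · congr 1; omega
      · omega
      · omega
      · rfl
  rw [h, Matrix.det_reindex, Matrix.det_transpose]
  exact ⟨_, rfl⟩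

lemma sylvester_map {R S : Type*} [CommRing R] [CommRing S] (φ : R →+* S) (f g : R[X]) (m n : ℕ) :
    _root_.sylvester (f.map φ) (g.map φ) m n = φ.mapMatrix (_root_.sylvester f g m n) := by
  ext i j
  simp only [_root_.sylvester, Matrix.of_apply, RingHom.mapMatrix_apply, Matrix.map_apply, coeff_map,
    apply_ite φ, map_zero]

lemma polyDisc_map {R S : Type*} [CommRing R] [CommRing S] [Nontrivial S] [IsAddTorsionFree R]
    [IsAddTorsionFree S]
    (φ : R →+* S) (f : R[X]) (hf : f.Monic) : polyDisc (f.map φ) = φ (polyDisc f) := by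
  rw [polyDisc, polyDisc, _root_.resultant, _root_.resultant, natDegree_derivative, natDegree_derivative,
    hf.natDegree_map, derivative_map, sylvester_map, map_mul, ← RingHom.map_det]
  simp

/-- the polynomial with given lower coefficients -/
noncomputable def f0 {R : Type*} [CommRing R] (n : ℕ) (s : Fin (n - 2) → R) : R[X] :=
  X ^ n + ∑ i : Fin (n - 2), C (s i) * X ^ (n - ((i : ℕ) + 2))

lemma f0_map {R S : Type*} [CommRing R] [CommRing S] (φ : R →+* S) (n : ℕ) (s : Fin (n - 2) → R) :
    (f0 n s).map φ = f0 n (fun i => φ (s i)) := by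
  simp [f0, Polynomial.map_sum]

lemma f0_coeff {R : Type*} [CommRing R] (n j : ℕ) (s : Fin (n - 2) → R) :
    (f0 n s).coeff j = (if j = n then 1 else 0) +
      ∑ i : Fin (n - 2), if j = n - ((i : ℕ) + 2) then s i else 0 := by
  simp [f0, coeff_X_pow, finsetSum_coeff]

lemma f0_coeff_n {R : Type*} [CommRing R] (n : ℕ) (hn : 3 ≤ n) (s : Fin (n - 2) → R) :
    (f0 n s).coeff n = 1 := by
  rw [f0_coeff, if_pos rfl, Finset.sum_eq_zero, add_zero]
  intro i _
  rw [if_neg (by omega)]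

lemma f0_coeff_zero {R : Type*} [CommRing R] (n j : ℕ) (hn : 3 ≤ n) (s : Fin (n - 2) → R)
    (hj : j = 0 ∨ j = n - 1 ∨ n < j) :
    (f0 n s).coeff j = 0 := by
  rw [f0_coeff, if_neg (by omega), Finset.sum_eq_zero, add_zero]
  intro i _
  rw [if_neg (by omega)]

lemma f0_coeff_s {R : Type*} [CommRing R] (n : ℕ) (hn : 3 ≤ n) (s : Fin (n - 2) → R)
    (i : Fin (n - 2)) : (f0 n s).coeff (n - ((i : ℕ) + 2)) = s i := by
  rw [f0_coeff, if_neg (by omega), zero_add, Finset.sum_eq_single i]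
  · simp
  · intro b _ hb
    rw [if_neg]
    intro h
    apply hb
    apply Fin.ext
    omega
  · simp

lemma f0_natDegree {R : Type*} [CommRing R] [Nontrivial R] (n : ℕ) (hn : 3 ≤ n)
    (s : Fin (n - 2) → R) : (f0 n s).natDegree = n := by
  apply natDegree_eq_of_le_of_coeff_ne_zero
  · rw [natDegree_le_iff_coeff_eq_zero]
    intro N hN
    exact f0_coeff_zero n N hn s (by omega)
  · rw [f0_coeff_n n hn]; exact one_ne_zero

lemma f0_monic {R : Type*} [CommRing R] [Nontrivial R] (n : ℕ) (hn : 3 ≤ n)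
    (s : Fin (n - 2) → R) : (f0 n s).Monic := by
  rw [Monic, leadingCoeff, f0_natDegree n hn, f0_coeff_n n hn]

lemma shift_monic {R : Type*} [CommRing R] [Nontrivial R] (f : R[X]) (n : ℕ) (hn : 1 ≤ n)
    (hm : f.Monic) (hd : f.natDegree = n) :
    (f.map C - C (X : R[X])).Monic ∧ (f.map C - C (X : R[X])).natDegree = n := by
  have h1 : (f.map (C : R →+* R[X])).Monic := hm.map C
  have h2 : (f.map (C : R →+* R[X])).natDegree = n := by rw [hm.natDegree_map, hd]
  have h3 : (C (X : R[X])).degree < (f.map (C : R →+* R[X])).degree := by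
    rw [degree_eq_natDegree h1.ne_zero, h2]
    exact degree_C_le.trans_lt (by exact_mod_cast hn)
  exact ⟨h1.sub_of_left h3, by rw [natDegree_sub_eq_left_of_natDegree_lt, h2]; rw [h2, natDegree_C]; omega⟩

lemma disc_formula {K : Type*} [Field K] [CharZero K] (f : K[X]) (n : ℕ) (hn : 1 ≤ n)
    (hm : f.Monic) (hd : f.natDegree = n) (hs : (derivative f).Splits) :
    ∃ z : ℤ, z ≠ 0 ∧ polyDisc (f.map C - C (X : K[X])) =
      C (z : K) * ((derivative f).roots.map fun c => X - C (f.eval c)).prod := by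
  obtain ⟨hFm, hFd⟩ := shift_monic f n hn hm hd
  set F := f.map C - C (X : K[X]) with hF
  have hF' : derivative F = (derivative f).map C := by simp [hF, derivative_map]
  have hlc : (derivative f).leadingCoeff = n := by
    rw [leadingCoeff, natDegree_derivative, hd, coeff_derivative, show n - 1 + 1 = n by omega]
    have : f.coeff n = 1 := by rw [← hd]; exact hm
    rw [this, one_mul, ← Nat.cast_succ]; congr 1; omega
  obtain ⟨ε, hε⟩ := det_sylvester_eq F (derivative F) n (n - 1)
  have hres : Polynomial.resultant (derivative F) F (n - 1) n =
      C ((n : K) ^ n) * ((derivative f).roots.map fun c => C (f.eval c) - X).prod := by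
    have h1 : (derivative F).natDegree = n - 1 := by rw [natDegree_derivative, hFd]
    have h2 := resultant_eq_prod_eval (derivative F) F n hFd.le (by rw [hF']; exact hs.map C)
    rw [h1] at h2
    rw [h2]
    congr 1
    · rw [hF', leadingCoeff_map_of_injective C_injective, hlc, C_pow]
    · rw [hF', hs.roots_map, Multiset.map_map]
      congr 1
      apply Multiset.map_congr rfl
      intro c _
      simp [hF, eval_map, eval₂_at_apply]
  have hneg : ((derivative f).roots.map fun c => C (f.eval c) - X).prod =
     (-1) ^ (derivative f).roots.card * ((derivative f).roots.map fun c => X - C (f.eval c)).prod := by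
    rw [← Multiset.prod_replicate, ← Multiset.map_const', ← Multiset.prod_map_mul]
    congr 1
    apply Multiset.map_congr rfl
    intro c _
    ring
  refine ⟨(-1) ^ (n * (n - 1) / 2) * ε * (n : ℤ) ^ n * (-1) ^ (derivative f).roots.card, ?_, ?_⟩
  · have : (n : ℤ) ≠ 0 := by exact_mod_cast (by omega : n ≠ 0)
    simp [this]
  · rw [polyDisc, _root_.resultant, natDegree_derivative, hFd, hε, hres, hneg]
    simp
    ring

lemma not_irred_iff {R : Type*} [CommRing R] [IsDomain R] (d : R) :
    ¬ Irreducible (X ^ 2 - C d : R[X]) ↔ ∃ q, d = q ^ 2 := by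
  rw [(monic_X_pow_sub_C d two_ne_zero).not_irreducible_iff_exists_add_mul_eq_coeff
    (natDegree_X_pow_sub_C)]
  simp only [coeff_sub, coeff_X_pow, coeff_C]
  constructor
  · rintro ⟨a, b, h1, h2⟩
    simp at h1 h2
    refine ⟨a, ?_⟩
    linear_combination -h1 + a * h2
  · rintro ⟨q, rfl⟩
    exact ⟨q, -q, by simp; ring, by simp⟩

lemma krull_le {R S : Type*} [CommRing R] [CommRing S] (φ : R →+* S) (h : φ.IsIntegral) :
    ringKrullDim S ≤ ringKrullDim R := by
  algebraize [φ]
  apply Order.krullDim_le_of_strictMono (PrimeSpectrum.comap φ)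
  intro p q hpq
  exact Ideal.IsIntegral.comap_lt_comap (R := R) (I := p.asIdeal) (J := q.asIdeal) hpq

lemma disc_map {R S : Type*} [CommRing R] [CommRing S] [Nontrivial R] [Nontrivial S]
    [IsAddTorsionFree R[X]] [IsAddTorsionFree S[X]] (φ : R →+* S) (f : R[X]) (n : ℕ) (hn : 1 ≤ n)
    (hm : f.Monic) (hd : f.natDegree = n) :
    polyDisc ((f.map φ).map C - C (X : S[X])) = (polyDisc (f.map C - C (X : R[X]))).map φ := by
  have h := polyDisc_map (mapRingHom φ) _ (shift_monic f n hn hm hd).1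
  rw [coe_mapRingHom] at h
  rw [← h]
  congr 1
  rw [Polynomial.map_sub, Polynomial.map_map, Polynomial.map_map, map_C]
  congr 2
  · ext a; simp
  · simp

lemma prod_coeff_mem {K : Type*} [Field K] (V : ValuationSubring K) (n : ℕ) (M : Multiset K)
    (h : ∀ a ∈ M, a ∈ V) (j : ℕ) : (C (n : K) * (M.map fun a => X - C a).prod).coeff j ∈ V := by
  obtain ⟨M', hM'⟩ : ∃ M' : Multiset V, M'.map V.subtype = M := by
    refine ⟨M.pmap (fun a ha => (⟨a, ha⟩ : V)) h, ?_⟩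
    rw [Multiset.map_pmap]
    simp [Multiset.pmap_eq_map]
  have : C (n : K) * (M.map fun a => X - C a).prod =
      (C (n : V) * (M'.map fun a => X - C a).prod).map V.subtype := by
    rw [← hM']
    simp [Polynomial.map_multiset_prod, Multiset.map_map]
  rw [this, coeff_map]
  exact SetLike.coe_mem _

lemma root_mem {K : Type*} [Field K] (V : ValuationSubring K) (P : K[X]) (hP : P.Monic)
    (hc : ∀ i, P.coeff i ∈ V) (x : K) (hx : P.eval x = 0) : x ∈ V := by
  obtain ⟨G, hG⟩ : ∃ G : V[X], G.map V.subtype = P := by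
    have : P ∈ lifts V.subtype := by
      rw [lifts_iff_coeff_lifts]
      intro i
      exact ⟨⟨_, hc i⟩, rfl⟩
    exact this
  have hinj : Function.Injective V.subtype := Subtype.val_injective
  have hGm : G.Monic := hinj.monic_map_iff.2 (hG ▸ hP)
  have hIntegral : IsIntegral V x := ⟨G, hGm, by
    change eval₂ V.subtype x G = 0
    rw [← eval_map, hG, hx]⟩
  obtain ⟨y, hy⟩ := IsIntegrallyClosed.isIntegral_iff.1 hIntegral
  rw [← hy]
  exact y.2

lemma integralElem_of_range {R A K : Type*} [CommRing R] [CommRing A] [Field K] (φ : R →+* A)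
    (ι : A →+* K) (hι : Function.Injective ι) (x : A)
    (h : IsIntegral (ι.comp φ).range (ι x)) : φ.IsIntegralElem x := by
  obtain ⟨p, hp, hp0⟩ := h
  obtain ⟨q, hq, -, hqm⟩ := lifts_and_degree_eq_and_monic (f := (ι.comp φ).rangeRestrict)
    (p := p) (by
      rw [lifts_iff_coeff_lifts]
      intro i
      exact (ι.comp φ).rangeRestrict_surjective _) hp
  refine ⟨q, hqm, hι ?_⟩
  rw [map_zero, hom_eval₂, ← hp0, ← hq, eval₂_map]
  rfl

lemma generic (n : ℕ) (hn : 3 ≤ n) :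
    ∃ P : (MvPolynomial (Fin (n - 2)) ℂ)[X], P.Monic ∧ P.natDegree = n - 1 ∧
      (∃ z : ℂ, z ≠ 0 ∧ polyDisc ((f0 n (MvPolynomial.X (R := ℂ))).map C - C X) =
        C (MvPolynomial.C z) * P) ∧
      (MvPolynomial.aeval (R := ℂ) (fun j : ℕ => P.coeff j)).toRingHom.IsIntegral := by
  set A := MvPolynomial (Fin (n - 2)) ℂ with hA
  set f : A[X] := f0 n (MvPolynomial.X (R := ℂ)) with hf
  set D := polyDisc (f.map C - C (X : A[X])) with hD
  have hfm : f.Monic := f0_monic n hn _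
  have hfd : f.natDegree = n := f0_natDegree n hn _
  let K := AlgebraicClosure (FractionRing A)
  let ι : A →+* K := (algebraMap (FractionRing A) K).comp (algebraMap A (FractionRing A))
  have hι : Function.Injective ι :=
    (algebraMap (FractionRing A) K).injective.comp (IsFractionRing.injective A (FractionRing A))
  have : CharZero K := charZero_of_injective_ringHom hι
  set fK := f.map ι with hfK
  have hfKm : fK.Monic := hfm.map ι
  have hfKd : fK.natDegree = n := by rw [hfK, hfm.natDegree_map, hfd]
  have hsp : (derivative fK).Splits := IsAlgClosed.splits _
  obtain ⟨z, hz, hform⟩ := disc_formula fK n (by omega) hfKm hfKd hsp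
  rw [hfK, disc_map ι f n (by omega) hfm hfd, ← hfK, ← hD] at hform
  set Q := ((derivative fK).roots.map fun c => X - C (fK.eval c)).prod with hQ
  have hcard : (derivative fK).roots.card = n - 1 := by
    rw [← hsp.natDegree_eq_card_roots, natDegree_derivative, hfKd]
  have hQm : Q.Monic := monic_multiset_prod_of_monic _ _ fun a _ => monic_X_sub_C _
  have hQd : Q.natDegree = n - 1 := by
    rw [hQ, ← hcard]
    have := natDegree_multiset_prod_X_sub_C_eq_card ((derivative fK).roots.map fun c => fK.eval c)
    rwa [Multiset.map_map, Multiset.card_map] at this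
  have hzC : (z : ℂ) ≠ 0 := by exact_mod_cast hz
  have hzK : (z : K) ≠ 0 := by exact_mod_cast hz
  have hzz : (MvPolynomial.C (z : ℂ)⁻¹ : A) * MvPolynomial.C (z : ℂ) = 1 := by
    rw [← map_mul, inv_mul_cancel₀ hzC, map_one]
  set P : A[X] := C (MvPolynomial.C (z : ℂ)⁻¹) * D with hP
  have hPD : D = C (MvPolynomial.C (z : ℂ)) * P := by
    rw [hP, ← mul_assoc, ← C_mul, mul_comm (MvPolynomial.C _), hzz]; simp
  have hPQ : P.map ι = Q := by
    have h1 : ι (MvPolynomial.C (z : ℂ)⁻¹) * z = 1 := by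
      have := congrArg ι hzz
      simpa using this
    rw [hP, Polynomial.map_mul, hform, ← mul_assoc, map_C, ← C_mul, h1]; simp
  have hPm : P.Monic := hι.monic_map_iff.2 (hPQ ▸ hQm)
  refine ⟨P, hPm, ?_, ⟨z, hzC, hPD⟩, ?_⟩
  · rw [← hQd, ← hPQ, natDegree_map_eq_of_injective hι]
  set φ : MvPolynomial ℕ ℂ →ₐ[ℂ] A := MvPolynomial.aeval (R := ℂ) (fun j : ℕ => P.coeff j) with hφ
  have hX : ∀ i : Fin (n - 2), φ.toRingHom.IsIntegralElem (MvPolynomial.X i) := by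
    intro i
    apply integralElem_of_range _ ι hι
    apply integral_of_val
    intro V hV
    have hVQ : ∀ j : ℕ, j ≠ 0 → (j : K) ≠ 0 ∧ (j : K)⁻¹ ∈ V := by
      intro j hj
      refine ⟨by exact_mod_cast hj, hV ⟨MvPolynomial.C (j : ℂ)⁻¹, ?_⟩⟩
      have hjC : (j : ℂ) ≠ 0 := by exact_mod_cast hj
      have h1 : (ι.comp φ.toRingHom) (MvPolynomial.C (j : ℂ)⁻¹ * MvPolynomial.C (j : ℂ)) = 1 := by
        rw [← map_mul, inv_mul_cancel₀ hjC, map_one, map_one]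
      rw [map_mul, map_natCast MvPolynomial.C, map_natCast] at h1
      exact eq_inv_of_mul_eq_one_left h1
    have hPV : ∀ j, Q.coeff j ∈ V := by
      intro j
      rw [← hPQ, coeff_map]
      apply hV
      exact ⟨MvPolynomial.X j, by simp [hφ]⟩
    have hdf : derivative fK = C (n : K) * ((derivative fK).roots.map fun a => X - C a).prod := by
      have h1 := hsp.eq_prod_roots
      have hlc : (derivative fK).leadingCoeff = n := by
        rw [leadingCoeff, natDegree_derivative, hfKd, coeff_derivative,
          show n - 1 + 1 = n by omega]
        have : fK.coeff n = 1 := by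
          have h9 : fK.coeff fK.natDegree = 1 := hfKm
          rwa [hfKd] at h9
        rw [this, one_mul, ← Nat.cast_succ]; congr 1; omega
      rwa [hlc] at h1
    have hcrit := crit_mem V hVQ fK n (by omega) hfKm hfKd
      (by rw [hfK, coeff_map, f0_coeff_zero n _ hn _ (by omega), map_zero])
      (by rw [hfK, coeff_map, f0_coeff_zero n _ hn _ (by omega), map_zero])
      (derivative fK).roots hdf hcard (by
        intro c hc
        refine root_mem V Q hQm hPV _ ?_
        rw [hQ, eval_multiset_prod, Multiset.map_map]
        apply Multiset.prod_eq_zero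
        refine Multiset.mem_map.2 ⟨c, hc, ?_⟩
        rw [Function.comp_apply, eval_sub, eval_X, eval_C, sub_self])
    have hco := prod_coeff_mem V n _ hcrit (n - ((i : ℕ) + 2) - 1)
    rw [← hdf, coeff_derivative, show n - ((i : ℕ) + 2) - 1 + 1 = n - ((i : ℕ) + 2) by omega,
      hfK, coeff_map, hf, f0_coeff_s n hn] at hco
    obtain ⟨h5, h6⟩ := hVQ (n - ((i : ℕ) + 2) - 1 + 1) (by omega)
    have h4 := V.mul_mem _ _ hco h6
    push_cast at h4 h5
    rwa [mul_assoc, mul_inv_cancel₀ h5, mul_one] at h4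
  intro x
  induction x using MvPolynomial.induction_on with
  | C a =>
    have : MvPolynomial.C a = φ.toRingHom (MvPolynomial.C a) := by
      simp [hφ]
      rfl
    rw [this]
    exact RingHom.isIntegralElem_map _
  | add p q hp hq => exact RingHom.IsIntegralElem.add _ hp hq
  | mul_X p i hp => exact RingHom.IsIntegralElem.mul _ hp (hX i)

lemma main_aux (n m : ℕ) (hn : 3 ≤ n) (hm : n - 1 = 2 * m)
    (Z : Set (Fin (n - 2) → ℂ))
    (hZ : Z = {s | ¬ Irreducible (X ^ 2 - C (polyDisc ((f0 n s).map C - C (X : ℂ[X]))) : ℂ[X][X])}) :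
    (∃ I : Ideal (MvPolynomial (Fin (n - 2)) ℂ),
      Z = {x : Fin (n - 2) → ℂ | ∀ p ∈ I, MvPolynomial.eval x p = 0}) ∧
    ringKrullDim (MvPolynomial (Fin (n - 2)) ℂ ⧸ vanishingIdeal Z) ≤ (m : WithBot (WithTop ℕ)) := by
  obtain ⟨P, hPm, hPd, ⟨z, hz, hD⟩, hIntegral⟩ := generic n hn
  obtain ⟨r, hrm, hrd, hr⟩ := exists_sqrt P m hPm (hPd.trans hm)
  have hZ2 : ∀ s, s ∈ Z ↔ P.map (MvPolynomial.eval s) = (r.map (MvPolynomial.eval s)) ^ 2 := by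
    intro s
    have h1 : polyDisc ((f0 n s).map C - C (X : ℂ[X])) = C z * P.map (MvPolynomial.eval s) := by
      have h2 := disc_map (MvPolynomial.eval s) (f0 n (MvPolynomial.X (R := ℂ))) n (by omega)
        (f0_monic n hn _) (f0_natDegree n hn _)
      rw [hD, f0_map] at h2
      simpa using h2
    rw [hZ, Set.mem_setOf_eq, not_irred_iff, h1]
    obtain ⟨w, hw⟩ := IsAlgClosed.exists_pow_nat_eq z (n := 2) (by norm_num)
    have hw0 : w ≠ 0 := by rintro rfl; apply hz; rw [← hw]; norm_num
    constructor
    · rintro ⟨q, hq⟩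
      refine sq_iff m (hPm.map _) (hrm.map _) (by rw [hrm.natDegree_map, hrd]) ?_
        ⟨C w⁻¹ * q, ?_⟩
      · rw [← Polynomial.map_pow, ← Polynomial.map_sub]
        exact degree_map_le.trans_lt hr
      · rw [mul_pow, ← hq, ← mul_assoc, ← C_pow, ← C_mul, ← hw, ← mul_pow, inv_mul_cancel₀ hw0]
        simp
    · intro h
      exact ⟨C w * r.map (MvPolynomial.eval s), by rw [h, mul_pow, ← C_pow, hw]⟩
  have hZ3 : ∀ s, s ∈ Z ↔ ∀ j, MvPolynomial.eval s ((P - r ^ 2).coeff j) = 0 := by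
    intro s
    rw [hZ2, ← sub_eq_zero, ← Polynomial.map_pow, ← Polynomial.map_sub, Polynomial.ext_iff]
    simp only [coeff_map, coeff_zero]
  constructor
  · refine ⟨Ideal.span (Set.range fun j => (P - r ^ 2).coeff j), ?_⟩
    ext s
    rw [hZ3, Set.mem_setOf_eq]
    constructor
    · intro h p hp
      have hle : Ideal.span (Set.range fun j => (P - r ^ 2).coeff j) ≤
          RingHom.ker (MvPolynomial.eval s) := by
        rw [Ideal.span_le]
        rintro _ ⟨j, rfl⟩
        exact h j
      exact hle hp
    · intro h j
      exact h _ (Ideal.subset_span ⟨j, rfl⟩)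
  · set J := vanishingIdeal Z with hJ
    let π := Ideal.Quotient.mkₐ ℂ J
    have hPr : P.map π.toRingHom = (r.map π.toRingHom) ^ 2 := by
      rw [← sub_eq_zero, ← Polynomial.map_pow, ← Polynomial.map_sub, Polynomial.ext_iff]
      intro j
      rw [coeff_map, coeff_zero]
      refine Ideal.Quotient.eq_zero_iff_mem.2 ?_
      intro s hs
      exact (hZ3 s).1 hs j
    let ψ : MvPolynomial (Fin m) ℂ →ₐ[ℂ] (MvPolynomial (Fin (n - 2)) ℂ ⧸ J) :=
      MvPolynomial.aeval fun i => π (r.coeff i)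
    let u : (MvPolynomial (Fin m) ℂ)[X] := X ^ m + ∑ i : Fin m, C (MvPolynomial.X i) * X ^ (i : ℕ)
    have hu : u.map ψ.toRingHom = r.map π.toRingHom := by
      rw [hrm.as_sum, hrd, Finset.sum_range]
      simp [u, ψ, Polynomial.map_sum]
    let θ : MvPolynomial ℕ ℂ →ₐ[ℂ] MvPolynomial (Fin m) ℂ :=
      MvPolynomial.aeval fun j => (u ^ 2).coeff j
    have hcomp : ψ.comp θ = π.comp (MvPolynomial.aeval (R := ℂ) (fun j : ℕ => P.coeff j)) := by
      apply MvPolynomial.algHom_ext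
      intro j
      simp only [AlgHom.comp_apply, θ, MvPolynomial.aeval_X]
      change ψ.toRingHom _ = π.toRingHom _
      rw [← coeff_map, ← coeff_map, Polynomial.map_pow, hu, hPr]
    have hψ : ψ.toRingHom.IsIntegral := by
      apply RingHom.IsIntegral.tower_top θ.toRingHom
      have h1 : ψ.toRingHom.comp θ.toRingHom = π.toRingHom.comp
          (MvPolynomial.aeval (R := ℂ) (fun j : ℕ => P.coeff j)).toRingHom := by
        ext x
        · exact DFunLike.congr_fun hcomp _
        · exact DFunLike.congr_fun hcomp _
      rw [h1]
      exact RingHom.IsIntegral.trans _ _ hIntegral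
        (RingHom.isIntegral_of_surjective _ Ideal.Quotient.mk_surjective)
    refine (krull_le _ hψ).trans ?_
    rw [MvPolynomial.ringKrullDim_of_isNoetherianRing, ringKrullDim_eq_zero_of_field]
    simp
    exact le_rfl

end ReducibleFibersAux

/-- Let `n ≥ 3` be odd.  The locus `Z ⊆ ℂ^(n−2)` of tuples `(s₂, …, s_{n−1})` for which
the plane curve `x² = disc_t(tⁿ + s₂ tⁿ⁻² + ⋯ + s_{n−1} t − y)` fails to be geometrically
irreducible (i.e. `x² − disc_t(⋯)` is not irreducible in `ℂ[y][x]`) is Zariski closed,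
and the Krull dimension of `ℂ[s₂, …, s_{n−1}]/I(Z)` is at most `(n − 1)/2`.
(Here `s : Fin (n−2) → ℂ` encodes the tuple via `s i = s_{i+2}`.) -/
theorem reducible_fibers_locus_closed_and_dim_le (n : ℕ) (hn : 3 ≤ n) (hodd : Odd n)
    (Z : Set (Fin (n - 2) → ℂ))
    (hZ : Z = {s : Fin (n - 2) → ℂ |
      ¬ Irreducible ((Polynomial.X : Polynomial (Polynomial ℂ)) ^ 2 -
        Polynomial.C (polyDisc
          ((Polynomial.X : Polynomial (Polynomial ℂ)) ^ n +
            ∑ i : Fin (n - 2),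
              Polynomial.C (Polynomial.C (s i)) *
                (Polynomial.X : Polynomial (Polynomial ℂ)) ^ (n - ((i : ℕ) + 2)) -
            Polynomial.C (Polynomial.X : Polynomial ℂ))))}) :
    (∃ I : Ideal (MvPolynomial (Fin (n - 2)) ℂ),
      Z = {x : Fin (n - 2) → ℂ | ∀ p ∈ I, MvPolynomial.eval x p = 0}) ∧
    ringKrullDim (MvPolynomial (Fin (n - 2)) ℂ ⧸ vanishingIdeal Z) ≤
      (((n - 1) / 2 : ℕ) : WithBot (WithTop ℕ)) := by
  obtain ⟨k, hk⟩ := hodd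
  have hm : n - 1 = 2 * ((n - 1) / 2) := by omega
  refine main_aux n ((n - 1) / 2) hn hm Z ?_
  rw [hZ]
  ext s
  have h : (Polynomial.X : Polynomial (Polynomial ℂ)) ^ n +
            ∑ i : Fin (n - 2),
              Polynomial.C (Polynomial.C (s i)) *
                (Polynomial.X : Polynomial (Polynomial ℂ)) ^ (n - ((i : ℕ) + 2)) =
      (f0 n s).map Polynomial.C := by
    rw [f0_map, f0]
  simp only [Set.mem_setOf_eq, h]
end
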